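/- arXiv:1902.09592 — 4 statements merged into one kernel-verified Lean document; each statement's English description precedes it below -/
import Mathlib

section
/- Let l, u, t be real numbers with l ≤ t ≤ u. Define Relax(ReLU)(t, l, u) ⊆ ℝ by: {t} if l ≥ 0; {0} if u ≤ 0; and {a : a ≥ t ∧ a ≥ 0 ∧ a ≤ (u/(u−l))·(t − l)} otherwise (i.e., when l < 0 < u). Then max(t, 0) ∈ Relax(ReLU)(t, l, u). -/
open Real

/-- The convex relaxation of the ReLU activation on `[l, u]`. -/
noncomputable def relaxReLU (t l u : ℝ) : Set ℝ :=
  if 0 ≤ l then {t}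
  else if u ≤ 0 then {0}
  else {a : ℝ | a ≥ t ∧ a ≥ 0 ∧ a ≤ (u / (u - l)) * (t - l)}

/-- The true ReLU output `max(t, 0)` always satisfies its convex relaxation. -/
theorem relu_mem_relaxReLU (l u t : ℝ) (hlt : l ≤ t) (htu : t ≤ u) :
    max t 0 ∈ relaxReLU t l u := by
  unfold relaxReLU
  split_ifs with h1 h2
  · simp only [Set.mem_singleton_iff]
    exact max_eq_left (h1.trans hlt)
  · simp only [Set.mem_singleton_iff]
    exact max_eq_right (htu.trans h2)
  · push Not at h1 h2
    have hd : 0 < u - l := by linarith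
    refine ⟨le_max_left _ _, le_max_right _ _, max_le ?_ ?_⟩
    · rw [div_mul_eq_mul_div, le_div_iff₀ hd]
      nlinarith [mul_nonneg (neg_nonneg.mpr h1.le) (sub_nonneg.mpr htu)]
    · exact mul_nonneg (div_nonneg h2.le hd.le) (sub_nonneg.mpr hlt)
end

section
/- Consider a feedforward ReLU network f : ℝⁿ → ℝᵐ given by x₀ = x and x_{k+1} = ReLU(W_k x_k + b_k) for k = 0, …, K−1 (ReLU applied componentwise), with f(x) = x_K. Let S_in = {x : l₀ ≤ x ≤ u₀} (componentwise), and suppose vectors l_k, u_k (k = 1, …, K) and pre-activation bound vectors l'_k, u'_k (k = 0, …, K−1) are valid, i.e., for every x ∈ S_in the true activations satisfy l_k ≤ x_k ≤ u_k and l'_k ≤ W_k x_k + b_k ≤ u'_k. Let F : ℝⁿ × ℝᵐ → ℝ and let C be a set containing T(F, S_in, S_out) = {(x, y, z) : F(x, y) = z, x ∈ S_in, l_K ≤ y ≤ u_K}. If every tuple (x̂₀, …, x̂_K, z) satisfying (x̂₀, x̂_K, z) ∈ C, l_k ≤ x̂_k ≤ u_k for all k, and (x̂_{k+1})_i ∈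 Relax(ReLU)((W_k x̂_k + b_k)_i, (l'_k)_i, (u'_k)_i) for all k, i, has z ≤ 0, then F(x, f(x)) ≤ 0 for all x ∈ S_in. -/
open Real Matrix

/-- The activations of a feedforward ReLU network with layer widths `d`,
weights `W` and biases `b`: `net d W b x k` is the `k`-th layer activation
on input `x`. -/
noncomputable def net (d : ℕ → ℕ)
    (W : (k : ℕ) → Matrix (Fin (d (k + 1))) (Fin (d k)) ℝ)
    (b : (k : ℕ) → Fin (d (k + 1)) → ℝ)
    (x : Fin (d 0) → ℝ) : (k : ℕ) → Fin (d k) → ℝ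
  | 0 => x
  | k + 1 => fun i => max ((W k *ᵥ net d W b x k + b k) i) 0

/-- The true ReLU value lies in the relaxation. -/
theorem max_mem_relaxReLU {t l u : ℝ} (h1 : l ≤ t) (h2 : t ≤ u) :
    max t 0 ∈ relaxReLU t l u := by
  unfold relaxReLU
  split_ifs with hl hu
  · exact max_eq_left (hl.trans h1)
  · exact max_eq_right (h2.trans hu)
  · push Not at hl hu
    refine ⟨le_max_left _ _, le_max_right _ _, ?_⟩
    have hd : 0 < u - l := by linarith
    rw [div_mul_eq_mul_div, le_div_iff₀ hd]
    rcases le_total t 0 with h | h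
    · rw [max_eq_right h]
      nlinarith
    · rw [max_eq_left h]
      nlinarith

/-- Lemma 3.1 for feedforward ReLU networks: if every feasible point of the
relaxed problem (layerwise ReLU relaxations, intermediate bounds, and a convex
outer set `C ⊇ T(F, S_in, S_out)`) has objective `z ≤ 0`, then `F(x, f(x)) ≤ 0`
for every `x` in the box `S_in = {x : l₀ ≤ x ≤ u₀}`. -/
theorem relaxed_network_verification_sound
    (K : ℕ) (d : ℕ → ℕ)
    (W : (k : ℕ) → Matrix (Fin (d (k + 1))) (Fin (d k)) ℝ)
    (b : (k : ℕ) → Fin (d (k + 1)) → ℝ)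
    (l u : (k : ℕ) → Fin (d k) → ℝ)
    (l' u' : (k : ℕ) → Fin (d (k + 1)) → ℝ)
    (Sin : Set (Fin (d 0) → ℝ))
    (hSin : Sin = {x | ∀ i, l 0 i ≤ x i ∧ x i ≤ u 0 i})
    -- validity of the activation bounds
    (hbounds : ∀ x ∈ Sin, ∀ k, k ≤ K →
      ∀ i, l k i ≤ net d W b x k i ∧ net d W b x k i ≤ u k i)
    -- validity of the pre-activation bounds
    (hpre : ∀ x ∈ Sin, ∀ k, k < K →
      ∀ i, l' k i ≤ (W k *ᵥ net d W b x k + b k) i ∧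
        (W k *ᵥ net d W b x k + b k) i ≤ u' k i)
    (F : (Fin (d 0) → ℝ) × (Fin (d K) → ℝ) → ℝ)
    (C : Set ((Fin (d 0) → ℝ) × (Fin (d K) → ℝ) × ℝ))
    (hTC : {p : (Fin (d 0) → ℝ) × (Fin (d K) → ℝ) × ℝ |
        F (p.1, p.2.1) = p.2.2 ∧ p.1 ∈ Sin ∧
          ∀ i, l K i ≤ p.2.1 i ∧ p.2.1 i ≤ u K i} ⊆ C)
    -- every feasible point of the relaxed problem has objective `z ≤ 0`
    (hfeas : ∀ (xr : (k : ℕ) → Fin (d k) → ℝ) (z : ℝ),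
      (xr 0, xr K, z) ∈ C →
      (∀ k, k ≤ K → ∀ i, l k i ≤ xr k i ∧ xr k i ≤ u k i) →
      (∀ k, k < K → ∀ i,
        xr (k + 1) i ∈ relaxReLU ((W k *ᵥ xr k + b k) i) (l' k i) (u' k i)) →
      z ≤ 0) :
    ∀ x ∈ Sin, F (x, net d W b x K) ≤ 0 := by
  intro x hx
  refine hfeas (fun k => net d W b x k) _ (hTC ⟨rfl, ?_, hbounds x hx K le_rfl⟩)
    (hbounds x hx) ?_
  · exact hx
  · intro k hk i
    obtain ⟨h1, h2⟩ := hpre x hx k hk i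
    exact max_mem_relaxReLU h1 h2
end

section
/- Let m ≥ 1, let l, u ∈ ℝᵐ with lⱼ < uⱼ for all j, let d ∈ ℝᵐ, ε ∈ ℝ, and let y ∈ ℝᵐ satisfy lⱼ ≤ yⱼ ≤ uⱼ for all j. Then there exists α ∈ ℝᵐ such that for every j, exp(yⱼ) ≤ αⱼ ≤ G(yⱼ, lⱼ, uⱼ), and ∑ⱼ αⱼ·(dⱼ − ε) = ∑ⱼ exp(yⱼ)·(dⱼ − ε). -/
open Real Finset

/-- The secant line of `exp` through `(l, exp l)` and `(u, exp u)`. -/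
noncomputable def expSecant (t l u : ℝ) : ℝ :=
  ((Real.exp u - Real.exp l) / (u - l)) * t +
    (u * Real.exp l - l * Real.exp u) / (u - l)

/-- Soundness of the softmax relaxation `C_smax`: for logits `y` in the box
`[l, u]` there exists `α` with `exp(yⱼ) ≤ αⱼ ≤ G(yⱼ, lⱼ, uⱼ)` for all `j` and
`∑ⱼ αⱼ(dⱼ − ε) = ∑ⱼ exp(yⱼ)(dⱼ − ε)`. -/
theorem softmax_relaxation_sound (m : ℕ) (hm : 1 ≤ m)
    (l u : Fin m → ℝ) (hlu : ∀ j, l j < u j)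
    (d : Fin m → ℝ) (ε : ℝ)
    (y : Fin m → ℝ) (hy : ∀ j, l j ≤ y j ∧ y j ≤ u j) :
    ∃ α : Fin m → ℝ,
      (∀ j, Real.exp (y j) ≤ α j ∧ α j ≤ expSecant (y j) (l j) (u j)) ∧
        ∑ j, α j * (d j - ε) = ∑ j, Real.exp (y j) * (d j - ε) := by
  refine ⟨fun j => Real.exp (y j), fun j => ⟨le_rfl, ?_⟩, rfl⟩
  obtain ⟨h1, h2⟩ := hy j
  have hp : 0 < u j - l j := sub_pos.2 (hlu j)
  have hne := hp.ne'
  have h := convexOn_exp.2 (Set.mem_univ (l j)) (Set.mem_univ (u j))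
    (div_nonneg (sub_nonneg.2 h2) hp.le) (div_nonneg (sub_nonneg.2 h1) hp.le)
    (by rw [← add_div, div_eq_one_iff_eq hne]; ring)
  simp only [smul_eq_mul] at h
  have e1 : (u j - y j) / (u j - l j) * l j + (y j - l j) / (u j - l j) * u j = y j := by
    rw [div_mul_eq_mul_div, div_mul_eq_mul_div, ← add_div, div_eq_iff hne]; ring
  rw [e1] at h
  refine h.trans (le_of_eq ?_)
  unfold expSecant
  ring
end

section
/- Let n, m ≥ 1 and let Q ∈ ℝ^{(1+n+m)×(1+n+m)}. Let l_x, u_x ∈ ℝⁿ and l_y, u_y ∈ ℝᵐ, and let x ∈ ℝⁿ, y ∈ ℝᵐ satisfy l_x ≤ x ≤ u_x and l_y ≤ y ≤ u_y componentwise. Set α := (1, x, y) ∈ ℝ^{1+n+m}, l := (1, l_x, l_y), u := (1, u_x, u_y), and z := αᵀ Q α. Then there exists X ∈ ℝ^{(1+n+m)×(1+n+m)} such that z = Tr(Q·X) and X satisfies all the constraints of Relax(Quad)(α, l, u), namely X_{ij} − lᵢαⱼ − αᵢlⱼ + lᵢlⱼ ≥ 0, X_{ij} − uᵢαⱼ −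 αᵢuⱼ + uᵢuⱼ ≥ 0, X_{ij} − lᵢαⱼ − αᵢuⱼ + lᵢuⱼ ≤ 0 for all i, j, αᵢ² ≤ X_{ii} ≤ (lᵢ+uᵢ)αᵢ − uᵢlᵢ for all i, and X − ααᵀ is positive semidefinite. -/
open Matrix

/-- Containment `T(F, S_in, S_out) ⊆ C_quad` for a quadratic specification
`F(x, y) = [1; x; y]ᵀ Q [1; x; y]` with box-bounded `x` and `y`: with
`α = (1, x, y)`, `l = (1, l_x, l_y)`, `u = (1, u_x, u_y)` and `z = αᵀQα`,
there is an `X` (namely `ααᵀ`) with `z = Tr(Q·X)` satisfying all constraints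
of `Relax(Quad)(α, l, u)`. -/
theorem quadratic_spec_relaxation_sound (n m : ℕ) (hn : 1 ≤ n) (hm : 1 ≤ m)
    (Q : Matrix (Unit ⊕ Fin n ⊕ Fin m) (Unit ⊕ Fin n ⊕ Fin m) ℝ)
    (lx ux : Fin n → ℝ) (ly uy : Fin m → ℝ)
    (x : Fin n → ℝ) (y : Fin m → ℝ)
    (hx : ∀ i, lx i ≤ x i ∧ x i ≤ ux i)
    (hy : ∀ j, ly j ≤ y j ∧ y j ≤ uy j)
    (α l u : Unit ⊕ Fin n ⊕ Fin m → ℝ)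
    (hα : α = Sum.elim (fun _ => 1) (Sum.elim x y))
    (hl : l = Sum.elim (fun _ => 1) (Sum.elim lx ly))
    (hu : u = Sum.elim (fun _ => 1) (Sum.elim ux uy))
    (z : ℝ) (hz : z = α ⬝ᵥ (Q *ᵥ α)) :
    ∃ X : Matrix (Unit ⊕ Fin n ⊕ Fin m) (Unit ⊕ Fin n ⊕ Fin m) ℝ,
      z = (Q * X).trace ∧
      (∀ i j, X i j - l i * α j - α i * l j + l i * l j ≥ 0) ∧
        (∀ i j, X i j - u i * α j - α i * u j + u i * u j ≥ 0) ∧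
          (∀ i j, X i j - l i * α j - α i * u j + l i * u j ≤ 0) ∧
            (∀ i, α i ^ 2 ≤ X i i ∧ X i i ≤ (l i + u i) * α i - u i * l i) ∧
              (X - Matrix.vecMulVec α α).PosSemidef := by
  have hla : ∀ i, l i ≤ α i := by
    subst hα hl
    rintro (i | i | i)
    · simp
    · simpa using (hx i).1
    · simpa using (hy i).1
  have hau : ∀ i, α i ≤ u i := by
    subst hα hu
    rintro (i | i | i)
    · simp
    · simpa using (hx i).2
    · simpa using (hy i).2
  clear hα hl hu
  refine ⟨Matrix.vecMulVec α α, ?_, ?_, ?_, ?_, ?_, ?_⟩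
  · rw [hz, Matrix.mul_vecMulVec, Matrix.trace_vecMulVec, dotProduct_comm]
  · intro i j
    rw [Matrix.vecMulVec_apply]
    nlinarith [mul_nonneg (sub_nonneg.2 (hla i)) (sub_nonneg.2 (hla j))]
  · intro i j
    rw [Matrix.vecMulVec_apply]
    nlinarith [mul_nonneg (sub_nonneg.2 (hau i)) (sub_nonneg.2 (hau j))]
  · intro i j
    rw [Matrix.vecMulVec_apply]
    nlinarith [mul_nonneg (sub_nonneg.2 (hla i)) (sub_nonneg.2 (hau j))]
  · intro i
    rw [Matrix.vecMulVec_apply]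
    constructor
    · exact (pow_two (α i)).le
    · nlinarith [mul_nonneg (sub_nonneg.2 (hla i)) (sub_nonneg.2 (hau i))]
  · rw [sub_self]
    exact Matrix.PosSemidef.zero
end
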